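/- arXiv:1907.09391 — 3 statements merged into one kernel-verified Lean document; each statement's English description precedes it below -/
import Mathlib

section
/- Let n be a positive integer, a(k) = k - n, b(k) = k + 1, and S_{a,b} = { (k-n)·x(k+1) - k·x(k) : x ∈ K[k] }. Then the quotient space K[k]/S_{a,b} is one-dimensional, spanned by the coset of k^n. -/
open Polynomial

lemma coeff_mono {K : Type*} [Field K] (n i j : ℕ) (h : i ≤ j) :
    ((X - C (n : K)) * (X + 1) ^ i - X * X ^ i).coeff j = ((j : K) - n) * (X ^ i : K[X]).coeff j := by
  rw [sub_mul, coeff_sub, coeff_sub, coeff_C_mul, coeff_X_add_one_pow, coeff_X_pow]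
  rcases j with _ | j
  · obtain rfl : i = 0 := by omega
    simp
  · rw [coeff_X_mul, coeff_X_mul, coeff_X_add_one_pow, coeff_X_pow]
    rcases Nat.lt_or_ge j i with h1 | h1
    · obtain rfl : i = j + 1 := by omega
      simp
    · rw [Nat.choose_eq_zero_of_lt (show i < j + 1 by omega), if_neg (show j + 1 ≠ i by omega)]
      rcases h1.eq_or_lt with rfl | h2
      · simp
      · rw [Nat.choose_eq_zero_of_lt h2, if_neg (by omega)]
        simp

lemma coeff_L {K : Type*} [Field K] (n : ℕ) (x : K[X]) (j : ℕ) (h : x.natDegree ≤ j) :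
    ((X - C (n : K)) * x.comp (X + 1) - X * x).coeff j = ((j : K) - n) * x.coeff j := by
  have hx := x.as_sum_range_C_mul_X_pow' (n := j + 1) (by omega)
  have e : (X - C (n : K)) * x.comp (X + 1) - X * x = ∑ i ∈ Finset.range (j + 1),
      C (x.coeff i) * ((X - C (n : K)) * (X + 1) ^ i - X * X ^ i) := by
    conv_lhs => rw [hx]
    rw [Polynomial.sum_comp, Finset.mul_sum, Finset.mul_sum, ← Finset.sum_sub_distrib]
    refine Finset.sum_congr rfl fun i _ => ?_
    simp only [mul_comp, C_comp, X_pow_comp]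
    ring
  rw [e]
  conv_rhs => rw [hx]
  rw [finsetSum_coeff, finsetSum_coeff, Finset.mul_sum]
  refine Finset.sum_congr rfl fun i hi => ?_
  rw [coeff_C_mul, coeff_C_mul, coeff_mono n i j (by simp at hi; omega)]
  ring

/-- for a(k) = k - n, b(k) = k + 1, the quotient K[k]/S_{a,b} is
one-dimensional, spanned by the coset of k^n. -/
theorem stmt4 {K : Type*} [Field K] [CharZero K] (n : ℕ) (hn : 0 < n) :
    (∀ p : Polynomial K, ∃ x : Polynomial K, ∃ c : K,
      p = ((X - C (n : K)) * x.comp (X + 1) - X * x) + C c * X ^ n) ∧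
    (∀ x : Polynomial K, ∀ c : K,
      C c * X ^ n = (X - C (n : K)) * x.comp (X + 1) - X * x → c = 0) := by
  constructor
  · have key : ∀ d : ℕ, ∀ p : K[X], (∀ j, d ≤ j → p.coeff j = 0) → ∃ x : K[X], ∃ c : K,
        p = ((X - C (n : K)) * x.comp (X + 1) - X * x) + C c * X ^ n := by
      intro d
      induction d with
      | zero =>
        intro p hp
        refine ⟨0, 0, ?_⟩
        ext j
        simp [hp j (Nat.zero_le _)]
      | succ d ih =>
        intro p hp
        by_cases hd : d = n
        · obtain ⟨x, c, h⟩ := ih (p - C (p.coeff d) * X ^ n) (by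
            intro j hj
            rw [coeff_sub, coeff_C_mul, coeff_X_pow]
            rcases hj.eq_or_lt with rfl | h
            · simp [hd]
            · rw [hp j h, if_neg (by omega)]; simp)
          refine ⟨x, c + p.coeff d, ?_⟩
          rw [C_add]
          linear_combination h
        · have hdn : (d : K) - n ≠ 0 := sub_ne_zero.mpr (by exact_mod_cast hd)
          set y : K[X] := C (p.coeff d / (d - n)) * X ^ d with hy
          have hyd : y.natDegree ≤ d := natDegree_C_mul_X_pow_le _ _
          obtain ⟨x, c, h⟩ := ih (p - ((X - C (n : K)) * y.comp (X + 1) - X * y)) (by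
            intro j hj
            rw [coeff_sub, coeff_L n y j (by omega), hy, coeff_C_mul, coeff_X_pow]
            rcases hj.eq_or_lt with rfl | h
            · simp only [if_true]
              field_simp
              ring
            · rw [hp j h, if_neg (by omega)]; simp)
          refine ⟨x + y, c, ?_⟩
          rw [add_comp]
          linear_combination h
    intro p
    exact key (p.natDegree + 1) p fun j hj => coeff_eq_zero_of_natDegree_lt (by omega)
  · intro x c h
    have hc : ∀ j, x.natDegree ≤ j → (C c * X ^ n : K[X]).coeff j = ((j : K) - n) * x.coeff j :=
      fun j hj => by rw [h, coeff_L n x j hj]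
    simp only [coeff_C_mul, coeff_X_pow] at hc
    rcases le_or_gt x.natDegree n with h1 | h1
    · simpa using hc n h1
    · have h2 := hc _ le_rfl
      rw [if_neg (by omega), mul_zero, eq_comm, mul_eq_zero] at h2
      rcases h2 with h2 | h2
      · have : x.natDegree = n := by exact_mod_cast sub_eq_zero.mp h2
        omega
      · have : x = 0 := leadingCoeff_eq_zero.mp h2
        simp [this] at h1
end

section
/- For every positive odd integer m there exist integers a_m, c_m such that for all primes p ≥ 5: Σ_{k=0}^{(p-1)/2} (-1)^k (4k+1)^m ((1/2)_k/(1)_k)^3 ≡ a_m·( p·(-1)^{(p-1)/2} + p^3 E_{p-3} ) + p^3 c_m (mod p^4), where E_n denotes the Euler numbers and the congruence is in the p-adic integers. -/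
/-- The Euler numbers, defined by 2/(e^x + e^{-x}) = Σ E_n x^n/n!, i.e. via the
convolution identity with cosh: Σ_{k=0}^n C(n,k)·((1+(-1)^{n-k})/2)·E_k = [n = 0]. -/
def eulerNumber : ℕ → ℚ
  | 0 => 1
  | (n + 1) =>
      -∑ k : Fin (n + 1),
        ((n + 1).choose k : ℚ) * ((1 + (-1 : ℚ) ^ (n + 1 - (k : ℕ))) / 2) * eulerNumber k
decreasing_by exact k.isLt


/-- `Red p x z`: the rational `x` is `p`-integral with reduction `z`. -/
def Red (p : ℕ) [Fact p.Prime] (x : ℚ) (z : ZMod p) : Prop :=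
  ∃ a b : ℤ, (b : ZMod p) ≠ 0 ∧ x = a / b ∧ z = a / b

namespace Red
variable {p : ℕ} [Fact p.Prime] {x y : ℚ} {z w : ZMod p}

lemma bne {b : ℤ} (h : (b : ZMod p) ≠ 0) : (b : ℚ) ≠ 0 := by
  intro h0
  apply h
  have : b = 0 := by exact_mod_cast h0
  simp [this]

lemma int (a : ℤ) : Red p (a : ℚ) (a : ZMod p) := ⟨a, 1, by simp, by simp, by simp⟩
lemma nat (a : ℕ) : Red p (a : ℚ) (a : ZMod p) := ⟨a, 1, by simp, by simp, by simp⟩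
lemma one : Red p 1 1 := ⟨1, 1, by simp, by simp, by simp⟩
lemma zero : Red p 0 0 := ⟨0, 1, by simp, by simp, by simp⟩

lemma add (h : Red p x z) (k : Red p y w) : Red p (x + y) (z + w) := by
  obtain ⟨a, b, hb, rfl, rfl⟩ := h
  obtain ⟨c, d, hd, rfl, rfl⟩ := k
  have := bne hb
  have := bne hd
  refine ⟨a * d + b * c, b * d, ?_, ?_, ?_⟩
  · push_cast; exact mul_ne_zero hb hd
  · push_cast; field_simp
  · push_cast; field_simp

lemma mul (h : Red p x z) (k : Red p y w) : Red p (x * y) (z * w) := by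
  obtain ⟨a, b, hb, rfl, rfl⟩ := h
  obtain ⟨c, d, hd, rfl, rfl⟩ := k
  have := bne hb
  have := bne hd
  refine ⟨a * c, b * d, ?_, ?_, ?_⟩
  · push_cast; exact mul_ne_zero hb hd
  · push_cast; field_simp
  · push_cast; field_simp

lemma neg (h : Red p x z) : Red p (-x) (-z) := by
  simpa using (int (p := p) (-1)).mul h

lemma sub (h : Red p x z) (k : Red p y w) : Red p (x - y) (z - w) := by
  simpa [sub_eq_add_neg] using h.add k.neg

lemma inv (h : Red p x z) (hz : z ≠ 0) : Red p (x⁻¹) (z⁻¹) := by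
  obtain ⟨a, b, hb, rfl, rfl⟩ := h
  refine ⟨b, a, ?_, by simp, by simp⟩
  intro h; simp [h] at hz

lemma div (h : Red p x z) (k : Red p y w) (hw : w ≠ 0) : Red p (x / y) (z / w) := by
  simpa [div_eq_mul_inv] using h.mul (k.inv hw)

lemma pow (h : Red p x z) (n : ℕ) : Red p (x ^ n) (z ^ n) := by
  induction n with
  | zero => simpa using one
  | succ n ih => simpa [pow_succ] using ih.mul h

lemma sum {n : ℕ} {f : ℕ → ℚ} {g : ℕ → ZMod p} (h : ∀ i < n, Red p (f i) (g i)) :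
    Red p (∑ i ∈ Finset.range n, f i) (∑ i ∈ Finset.range n, g i) := by
  induction n with
  | zero => simpa using zero
  | succ n ih =>
    rw [Finset.sum_range_succ, Finset.sum_range_succ]
    exact (ih fun i hi => h i (by omega)).add (h n (by omega))

lemma prod {n : ℕ} {f : ℕ → ℚ} {g : ℕ → ZMod p} (h : ∀ i < n, Red p (f i) (g i)) :
    Red p (∏ i ∈ Finset.range n, f i) (∏ i ∈ Finset.range n, g i) := by
  induction n with
  | zero => simpa using one
  | succ n ih =>
    rw [Finset.prod_range_succ, Finset.prod_range_succ]
    exact (ih fun i hi => h i (by omega)).mul (h n (by omega))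

lemma unique (h : Red p x z) (k : Red p x w) : z = w := by
  obtain ⟨a, b, hb, rfl, rfl⟩ := h
  obtain ⟨c, d, hd, h1, rfl⟩ := k
  have := bne hb
  have := bne hd
  rw [div_eq_div_iff (by assumption) (by assumption)] at h1
  rw [div_eq_div_iff hb hd]
  exact_mod_cast congrArg (Int.cast : ℤ → ZMod p) (by exact_mod_cast h1 : a * d = c * b)

lemma exists_mul (h : Red p x 0) : ∃ y w, Red p y w ∧ x = p * y := by
  obtain ⟨a, b, hb, rfl, h0⟩ := h
  have ha : (a : ZMod p) = 0 := by
    rcases div_eq_zero_iff.1 h0.symm with h | h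
    · exact h
    · exact absurd h hb
  obtain ⟨c, rfl⟩ := (ZMod.intCast_zmod_eq_zero_iff_dvd a p).1 ha
  exact ⟨c / b, c / b, ⟨c, b, hb, rfl, rfl⟩, by push_cast; ring⟩

lemma val (h : Red p x z) (n : ℕ) : (p : ℚ) ^ n * x = 0 ∨ (n : ℤ) ≤ padicValRat p ((p : ℚ) ^ n * x) := by
  by_cases hx : x = 0
  · left; simp [hx]
  right
  obtain ⟨a, b, hb, rfl, rfl⟩ := h
  have hp : (p : ℚ) ≠ 0 := by exact_mod_cast (Fact.out : p.Prime).ne_zero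
  have hb' := bne hb
  have ha : (a : ℚ) ≠ 0 := by intro h; simp [h] at hx
  rw [padicValRat.mul (pow_ne_zero _ hp) hx, padicValRat.div ha hb', padicValRat.pow,
    padicValRat.self (Fact.out : p.Prime).one_lt, padicValRat.of_int, padicValRat.of_int,
    padicValInt.eq_zero_of_not_dvd (z := b)]
  · simp
  · intro h; exact hb ((ZMod.intCast_zmod_eq_zero_iff_dvd b p).2 h)

end Red

/-- `Cg p n x`: `x` is divisible by `p ^ n` in the `p`-integral rationals. -/
def Cg (p : ℕ) [Fact p.Prime] (n : ℕ) (x : ℚ) : Prop :=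
  ∃ y w, Red p y w ∧ x = (p : ℚ) ^ n * y

namespace Cg
variable {p : ℕ} [Fact p.Prime] {n : ℕ} {x y : ℚ} {z w : ZMod p}

lemma add (h : Cg p n x) (k : Cg p n y) : Cg p n (x + y) := by
  obtain ⟨a, u, h, rfl⟩ := h
  obtain ⟨b, v, k, rfl⟩ := k
  exact ⟨a + b, u + v, h.add k, by ring⟩

lemma mul (h : Cg p n x) (k : Red p y w) : Cg p n (y * x) := by
  obtain ⟨a, u, h, rfl⟩ := h
  exact ⟨y * a, w * u, k.mul h, by ring⟩

lemma neg (h : Cg p n x) : Cg p n (-x) := by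
  obtain ⟨a, u, h, rfl⟩ := h
  exact ⟨-a, -u, h.neg, by ring⟩

lemma of_red (h : Red p x 0) : Cg p (n + 1) ((p : ℚ) ^ n * x) := by
  obtain ⟨y, w, h', rfl⟩ := h.exists_mul
  exact ⟨y, w, h', by ring⟩

end Cg

/-- half Pochhammer -/
def hf (k : ℕ) : ℚ := ∏ i ∈ Finset.range k, ((1 : ℚ) / 2 + i)

lemma hf_succ (k : ℕ) : hf (k + 1) = hf k * (1 / 2 + k) := Finset.prod_range_succ _ _

lemma hf_pos (k : ℕ) : 0 < hf k := Finset.prod_pos fun i _ => by positivity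

lemma hf_ne (k : ℕ) : hf k ≠ 0 := (hf_pos k).ne'

/-- the summand without polynomial factor -/
def tt (k : ℕ) : ℚ := (-1) ^ k * (hf k / k.factorial) ^ 3

lemma tt_succ (k : ℕ) : 8 * ((k : ℚ) + 1) ^ 3 * tt (k + 1) = - (2 * k + 1) ^ 3 * tt k := by
  unfold tt
  rw [hf_succ, Nat.factorial_succ]
  have : (k.factorial : ℚ) ≠ 0 := by exact_mod_cast k.factorial_ne_zero
  have : (k : ℚ) + 1 ≠ 0 := by positivity
  push_cast
  field_simp
  ring

def FF (n k : ℕ) : ℚ :=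
  (-1) ^ (n + k) * (4 * n + 1) * hf n ^ 2 * hf (n + k) * (n.descFactorial k : ℚ) /
    ((n.factorial : ℚ) ^ 3 * hf k ^ 2)

/-- `GG n k` is the companion at `k + 1`. -/
def GG (n k : ℕ) : ℚ :=
  (-1) ^ (n + k + 1) * 2 * hf n ^ 2 * hf (n + k) * (n.descFactorial (k + 1) : ℚ) * n ^ 2 /
    ((n.factorial : ℚ) ^ 3 * hf (k + 1) ^ 2)

lemma desc_succ_cast (n k : ℕ) :
    (n.descFactorial (k + 1) : ℚ) = ((n : ℚ) - k) * n.descFactorial k := by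
  rw [Nat.descFactorial_succ]
  by_cases h : k ≤ n
  · push_cast [Nat.cast_sub h]; ring
  · rw [Nat.descFactorial_of_lt (by omega)]; simp

lemma wz (n k : ℕ) : FF n k - FF n (k + 1) = GG (n + 1) k - GG n k := by
  unfold FF GG
  rw [desc_succ_cast n k, Nat.succ_descFactorial_succ, Nat.factorial_succ,
    show n + 1 + k = (n + k) + 1 by ring, show n + (k + 1) = (n + k) + 1 by ring,
    hf_succ, hf_succ, hf_succ]
  have h1 : (n.factorial : ℚ) ≠ 0 := by exact_mod_cast n.factorial_ne_zero
  have h2 : (n : ℚ) + 1 ≠ 0 := by positivity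
  have h3 := hf_ne k
  have h4 : (1 : ℚ) + 2 * k ≠ 0 := by positivity
  push_cast
  have : (1 : ℚ) / 2 + k ≠ 0 := by positivity
  generalize hf n = a at *
  generalize hf k = b at *
  generalize hf (n+k) = c at *
  generalize (n.factorial : ℚ) = d at *
  generalize (n.descFactorial k : ℚ) = e at *
  rw [pow_succ, pow_succ]
  field_simp
  ring

lemma wz_sum (N k : ℕ) : ∑ n ∈ Finset.range (N + 1), FF n k =
    ∑ n ∈ Finset.range (N + 1), FF n (k + 1) + GG (N + 1) k := by
  have : ∑ n ∈ Finset.range (N + 1), (FF n k - FF n (k + 1)) = GG (N + 1) k - GG 0 k := by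
    rw [← Finset.sum_range_sub (fun n => GG n k)]
    exact Finset.sum_congr rfl fun n _ => wz n k
  rw [Finset.sum_sub_distrib] at this
  have h0 : GG 0 k = 0 := by simp [GG]
  linarith

lemma wz_total (N K : ℕ) : ∑ n ∈ Finset.range (N + 1), FF n 0 =
    ∑ n ∈ Finset.range (N + 1), FF n K + ∑ k ∈ Finset.range K, GG (N + 1) k := by
  induction K with
  | zero => simp
  | succ K ih => rw [ih, Finset.sum_range_succ _ K, wz_sum N K]; ring

lemma S1_eq (N : ℕ) : ∑ k ∈ Finset.range (N + 1), tt k * (4 * (k : ℚ) + 1) =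
    FF N N + ∑ k ∈ Finset.range N, GG (N + 1) k := by
  have h : ∑ k ∈ Finset.range (N + 1), tt k * (4 * (k : ℚ) + 1) =
      ∑ n ∈ Finset.range (N + 1), FF n 0 := by
    refine Finset.sum_congr rfl fun n _ => ?_
    simp [FF, tt, hf]
    ring
  rw [h, wz_total N N, Finset.sum_range_succ]
  have : ∑ n ∈ Finset.range N, FF n N = 0 := by
    refine Finset.sum_eq_zero fun n hn => ?_
    simp [FF, Nat.descFactorial_of_lt (Finset.mem_range.1 hn)]
  rw [this]; ring

lemma prod_sym (c : ℚ) (N : ℕ) : ∏ i ∈ Finset.range (2 * N + 1), (c - 2 * N + 2 * i) =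
    c * ∏ j ∈ Finset.range N, (c ^ 2 - 4 * ((j : ℚ) + 1) ^ 2) := by
  induction N with
  | zero => simp
  | succ N ih =>
    rw [show 2 * (N + 1) + 1 = (2 * N + 1) + 1 + 1 by ring, Finset.prod_range_succ',
      Finset.prod_range_succ, Finset.prod_range_succ _ N, ← mul_assoc, ← ih]
    rw [Finset.prod_congr rfl (g := fun i : ℕ => (c - 2 * N + 2 * i))
      (fun i _ => by push_cast; ring)]
    push_cast
    ring

lemma hf_eq (n : ℕ) : hf n * 2 ^ n = ∏ i ∈ Finset.range n, (1 + 2 * (i : ℚ)) := by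
  induction n with
  | zero => simp [hf]
  | succ n ih => rw [hf_succ, Finset.prod_range_succ, ← ih]; ring

lemma FF_diag (N : ℕ) : FF N N = (-1) ^ N * (2 * N + 1) *
    ∏ j ∈ Finset.range N, (1 - (2 * (N : ℚ) + 1) ^ 2 * (1 / (4 * ((j : ℚ) + 1) ^ 2))) := by
  have h := prod_sym (2 * N + 1) N
  rw [Finset.prod_congr rfl (g := fun i : ℕ => (1 + 2 * (i : ℚ)))
      (fun i _ => by ring), ← hf_eq, hf_succ] at h
  have hp : (∏ j ∈ Finset.range N, (1 - (2 * (N : ℚ) + 1) ^ 2 * (1 / (4 * ((j : ℚ) + 1) ^ 2)))) *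
      ((-4) ^ N * (N.factorial : ℚ) ^ 2) =
      ∏ j ∈ Finset.range N, ((2 * (N : ℚ) + 1) ^ 2 - 4 * ((j : ℚ) + 1) ^ 2) := by
    rw [← Finset.prod_range_add_one_eq_factorial]
    push_cast
    have e : (-4 : ℚ) ^ N = ∏ _j ∈ Finset.range N, (-4 : ℚ) := by simp
    rw [← Finset.prod_pow, e, ← Finset.prod_mul_distrib, ← Finset.prod_mul_distrib]
    refine Finset.prod_congr rfl fun j _ => ?_
    have : (j : ℚ) + 1 ≠ 0 := by positivity
    field_simp
    ring
  rw [← hp] at h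
  have h1 : (N.factorial : ℚ) ≠ 0 := by exact_mod_cast N.factorial_ne_zero
  have h3 := hf_ne N
  unfold FF
  rw [Nat.descFactorial_self, ← two_mul]
  generalize ∏ j ∈ Finset.range N, (1 - (2 * (N : ℚ) + 1) ^ 2 * (1 / (4 * ((j : ℚ) + 1) ^ 2))) = P at *
  have e1 : (2 : ℚ) ^ (2 * N + 1) = 4 ^ N * 2 := by rw [pow_succ, pow_mul]; norm_num
  have e2 : (-4 : ℚ) ^ N = (-1) ^ N * 4 ^ N := by rw [← mul_pow]; norm_num
  have e3 : (-1 : ℚ) ^ (2 * N) = 1 := by simp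
  rw [e1, e2] at h
  rw [e3]
  have e4 : (4 : ℚ) ^ N ≠ 0 := by positivity
  have h' : hf (2 * N) * (4 * N + 1) = (2 * N + 1) * (P * ((-1) ^ N * (N.factorial : ℚ) ^ 2)) := by
    apply mul_right_cancel₀ e4
    push_cast at h
    linear_combination h
  field_simp
  linear_combination h'

lemma prod_one_sub {p : ℕ} [Fact p.Prime] {u : ℕ → ℚ} {v : ℕ → ZMod p} {n : ℕ}
    (h : ∀ i < n, Red p (u i) (v i)) :
    Cg p 3 ((∏ i ∈ Finset.range n, (1 - (p : ℚ) ^ 2 * u i)) -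
      (1 - (p : ℚ) ^ 2 * ∑ i ∈ Finset.range n, u i)) := by
  induction n with
  | zero => exact ⟨0, 0, Red.zero, by simp⟩
  | succ n ih =>
    have h1 := Red.sum (f := u) (g := v) fun i (hi : i < n) => h i (by omega)
    have h2 := h n (by omega)
    have h3 := ih fun i hi => h i (by omega)
    have h4 : Red p (1 - (p : ℚ) ^ 2 * u n) (1 - (p : ZMod p) ^ 2 * v n) :=
      Red.one.sub (((Red.nat p).pow 2).mul h2)
    have h5 : Cg p 3 ((p : ℚ) ^ 3 * (p * (u n * ∑ i ∈ Finset.range n, u i))) :=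
      ⟨_, _, (Red.nat p).mul (h2.mul h1), rfl⟩
    have := (h3.mul h4).add h5
    rw [Finset.prod_range_succ, Finset.sum_range_succ]
    convert this using 1
    ring

section modp
variable {p : ℕ} [Fact p.Prime] {N : ℕ}

lemma cast_ne {j : ℕ} (h0 : 0 < j) (h : j < p) : (j : ZMod p) ≠ 0 := by
  intro e
  rw [ZMod.natCast_eq_zero_iff] at e
  exact absurd (Nat.le_of_dvd h0 e) (by omega)

lemma hN (hp : p = 2 * N + 1) : (2 * N + 1 : ZMod p) = 0 := by
  have : ((2 * N + 1 : ℕ) : ZMod p) = 0 := by rw [← hp]; simp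
  exact_mod_cast this

lemma two_ne (hp5 : 5 ≤ p) : (2 : ZMod p) ≠ 0 := by
  exact_mod_cast cast_ne (p := p) (j := 2) (by norm_num) (by omega)

lemma red_half (hp : p = 2 * N + 1) (hp5 : 5 ≤ p) : Red p (1 / 2) (-(N : ZMod p)) := by
  have h2 := two_ne hp5
  have : (-(N : ZMod p)) = 1 / 2 := by
    field_simp
    linear_combination -hN hp
  rw [this]
  exact ⟨1, 2, by exact_mod_cast h2, by simp, by simp⟩

lemma desc_cast {k : ℕ} (hk : k ≤ N) : (N.descFactorial (k + 1) : ZMod p) =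
    ((N : ZMod p) - k) * N.descFactorial k := by
  rw [Nat.descFactorial_succ]
  push_cast [Nat.cast_sub hk]; ring

lemma red_hf (hp : p = 2 * N + 1) (hp5 : 5 ≤ p) {k : ℕ} (hk : k ≤ N) :
    Red p (hf k) ((-1) ^ k * N.descFactorial k) := by
  induction k with
  | zero => simpa [hf] using Red.one
  | succ k ih =>
    have := (ih (by omega)).mul ((red_half hp hp5).add (Red.nat k))
    rw [hf_succ, desc_cast (by omega)]
    convert this using 1
    ring

lemma desc_ne (hp : p = 2 * N + 1) {k : ℕ} (hk : k ≤ N) : (N.descFactorial k : ZMod p) ≠ 0 := by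
  induction k with
  | zero => simp
  | succ k ih =>
    rw [Nat.descFactorial_succ]
    push_cast
    exact mul_ne_zero (cast_ne (by omega) (by omega)) (ih (by omega))

lemma fact_ne {k : ℕ} (hk : k < p) : (k.factorial : ZMod p) ≠ 0 := by
  intro e
  rw [ZMod.natCast_eq_zero_iff, (Fact.out : p.Prime).dvd_factorial] at e
  omega

lemma red_hfN (hp : p = 2 * N + 1) (hp5 : 5 ≤ p) :
    Red p (hf N / N.factorial) ((-1) ^ N) := by
  have h1 := fact_ne (p := p) (k := N) (by omega)
  have := (red_hf hp hp5 le_rfl).div (Red.nat N.factorial) h1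
  rw [Nat.descFactorial_self] at this
  convert this using 1
  field_simp

lemma red_tt (hp : p = 2 * N + 1) (hp5 : 5 ≤ p) : Red p (tt N) 1 := by
  have := ((Red.one.neg).pow N).mul ((red_hfN hp hp5).pow 3)
  unfold tt
  convert this using 1
  rw [← pow_mul, ← pow_add, show N + N * 3 = 2 * (2 * N) by ring, pow_mul]
  simp

lemma inv_sq {z : ZMod p} (hp5 : 5 ≤ p) (hz : z ≠ 0) : 1 / z ^ 2 = z ^ (p - 3) := by
  rw [div_eq_iff (pow_ne_zero _ hz), ← pow_add, show p - 3 + 2 = p - 1 by omega,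
    ZMod.pow_card_sub_one_eq_one hz]

lemma sum_pow_zero (hp : p = 2 * N + 1) (hp5 : 5 ≤ p) :
    ∑ j ∈ Finset.range N, ((j + 1 : ℕ) : ZMod p) ^ (p - 3) = 0 := by
  have h := FiniteField.sum_pow_lt_card_sub_one (K := ZMod p) (p - 3) (by rw [ZMod.card]; omega)
  have h1 : ∑ x : ZMod p, x ^ (p - 3) = ∑ j ∈ Finset.range p, (j : ZMod p) ^ (p - 3) := by
    symm
    refine Finset.sum_bij (fun j _ => (j : ZMod p)) (by simp) ?_ ?_ (by simp)
    · intro a ha b hb hab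
      rw [ZMod.natCast_eq_natCast_iff'] at hab
      rwa [Nat.mod_eq_of_lt (Finset.mem_range.1 ha), Nat.mod_eq_of_lt (Finset.mem_range.1 hb)] at hab
    · intro b _
      exact ⟨b.val, by simpa using ZMod.val_lt b, by simp⟩
  rw [h1] at h
  have h2 : ∑ j ∈ Finset.range p, (j : ZMod p) ^ (p - 3) =
      2 * ∑ j ∈ Finset.range N, ((j + 1 : ℕ) : ZMod p) ^ (p - 3) := by
    have : ∀ f : ℕ → ZMod p, ∑ j ∈ Finset.range p, f j = ∑ j ∈ Finset.range (N + N + 1), f j := by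
      intro f
      exact congrArg (fun n => ∑ j ∈ Finset.range n, f j) (by omega : p = N + N + 1)
    rw [this, Finset.sum_range_succ', Finset.sum_range_add, two_mul]
    have hz : (((0 : ℕ)) : ZMod p) ^ (p - 3) = 0 := by
      rw [Nat.cast_zero]; exact zero_pow (by omega)
    rw [hz, add_zero]
    congr 1
    rw [← Finset.sum_range_reflect]
    refine Finset.sum_congr rfl fun j hj => ?_
    have hj := Finset.mem_range.1 hj
    have e : ((N + (N - 1 - j) + 1 : ℕ) : ZMod p) = -((j + 1 : ℕ) : ZMod p) := by
      rw [eq_neg_iff_add_eq_zero, ← Nat.cast_add,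
        show N + (N - 1 - j) + 1 + (j + 1) = p by omega]
      simp
    rw [e]
    exact Even.neg_pow ⟨N - 1, by omega⟩ _
  rw [h2] at h
  exact (mul_eq_zero.1 h).resolve_left (two_ne hp5)

lemma red_inv_sq (hp : p = 2 * N + 1) (hp5 : 5 ≤ p) {j : ℕ} (hj : j < N) :
    Red p (1 / ((j : ℚ) + 1) ^ 2) (((j + 1 : ℕ) : ZMod p) ^ (p - 3)) := by
  have hz := cast_ne (p := p) (j := j + 1) (by omega) (by omega)
  rw [← inv_sq hp5 hz]
  have := Red.one.div ((Red.nat (p := p) (j + 1)).pow 2) (pow_ne_zero 2 hz)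
  simpa using this

lemma red_H2 (hp : p = 2 * N + 1) (hp5 : 5 ≤ p) :
    Red p (∑ j ∈ Finset.range N, 1 / ((j : ℚ) + 1) ^ 2) 0 := by
  rw [← sum_pow_zero hp hp5]
  exact Red.sum fun j hj => red_inv_sq hp hp5 hj

lemma red_quarter (hp5 : 5 ≤ p) : Red p (1 / 4) (1 / 4) := by
  refine ⟨1, 4, ?_, by simp, by simp⟩
  have := mul_ne_zero (two_ne hp5) (two_ne hp5)
  push_cast
  convert this using 1
  norm_num

lemma cg_diag (hp : p = 2 * N + 1) (hp5 : 5 ≤ p) :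
    Cg p 4 (FF N N - p * (-1) ^ N) := by
  have hpq : (p : ℚ) = 2 * N + 1 := by rw [hp]; push_cast; ring
  rw [FF_diag, ← hpq]
  have h1 : ∀ j < N, Red p (1 / (4 * ((j : ℚ) + 1) ^ 2))
      (1 / 4 * (((j + 1 : ℕ) : ZMod p) ^ (p - 3))) := by
    intro j hj
    have := (red_quarter hp5).mul (red_inv_sq hp hp5 hj)
    convert this using 1
    rw [one_div_mul_one_div]
  have h2 := prod_one_sub h1
  have h3 : Red p (∑ j ∈ Finset.range N, 1 / (4 * ((j : ℚ) + 1) ^ 2)) 0 := by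
    have := (red_quarter hp5).mul (red_H2 hp hp5)
    rw [mul_zero, Finset.mul_sum] at this
    convert this using 3
    rw [one_div_mul_one_div]
  have h4 : Cg p 3 ((p : ℚ) ^ 2 * _) := Cg.of_red h3
  have h5 := h2.add h4.neg
  obtain ⟨y, w, hy, e⟩ := h5
  refine ⟨(-1) ^ N * y, (-1) ^ N * w, ((Red.one.neg).pow N).mul hy, ?_⟩
  linear_combination (-1) ^ N * (p : ℚ) * e

lemma hf_split (hp : p = 2 * N + 1) (k : ℕ) : hf (N + k + 1) =
    hf N * (p / 2) * ∏ i ∈ Finset.range k, ((p : ℚ) / 2 + ((i + 1 : ℕ) : ℚ)) := by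
  have hpq : (p : ℚ) = 2 * N + 1 := by rw [hp]; push_cast; ring
  induction k with
  | zero => rw [add_zero, hf_succ, hpq]; simp; left; ring
  | succ k ih =>
    rw [show N + (k + 1) + 1 = (N + k + 1) + 1 by ring, hf_succ, ih, Finset.prod_range_succ, hpq]
    push_cast
    ring

/-- rational model of the correction terms -/
def bb (N k : ℕ) : ℚ := (-1) ^ k * (k.factorial : ℚ) / ((N.descFactorial (k + 1) : ℚ) * ((N : ℚ) - k))

lemma red_GG (hp : p = 2 * N + 1) (hp5 : 5 ≤ p) {k : ℕ} (hk : k < N) :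
    ∃ g z, Red p g z ∧ Red p (1 / 4 * bb N k) z ∧ GG (N + 1) k = (p : ℚ) ^ 3 * g := by
  have hpq : (p : ℚ) = 2 * N + 1 := by rw [hp]; push_cast; ring
  set Q : ℚ := ∏ i ∈ Finset.range k, ((p : ℚ) / 2 + ((i + 1 : ℕ) : ℚ)) with hQ
  have hQr : Red p Q (k.factorial : ZMod p) := by
    have : (k.factorial : ZMod p) = ∏ i ∈ Finset.range k, ((p : ZMod p) * (1 / 2) + ((i + 1 : ℕ) : ZMod p)) := by
      rw [← Finset.prod_range_add_one_eq_factorial]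
      push_cast
      simp only [CharP.cast_eq_zero, zero_mul, zero_add]
    rw [this]
    refine Red.prod fun i _ => ?_
    rw [div_eq_mul_one_div]
    refine ((Red.nat p).mul ?_).add (Red.nat _)
    exact ⟨1, 2, by exact_mod_cast two_ne hp5, by simp, by simp⟩
  have hd := desc_ne hp (k := k) (by omega)
  have hd1 := desc_ne hp (k := k + 1) (by omega)
  have hNk : (N : ZMod p) - k ≠ 0 := by
    have := cast_ne (p := p) (j := N - k) (by omega) (by omega)
    rwa [Nat.cast_sub hk.le] at this
  have hm : ((-1 : ZMod p)) ^ (k + 1) ≠ 0 := pow_ne_zero _ (by simp)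
  refine ⟨(-1) ^ (N + k) * (1 / 4) * (hf N / N.factorial) ^ 3 * Q * N.descFactorial k / hf (k + 1) ^ 2,
    _, (((((((Red.one.neg).pow (N + k)).mul (red_quarter hp5)).mul ((red_hfN hp hp5).pow 3)).mul
      hQr).mul (Red.nat (N.descFactorial k))).div ((red_hf hp hp5 (k := k + 1) (by omega)).pow 2)
      (pow_ne_zero _ (mul_ne_zero hm hd1))), ?_, ?_⟩
  · have := (red_quarter hp5).mul ((((Red.one.neg).pow k).mul (Red.nat (p := p) k.factorial)).div
      ((Red.nat (N.descFactorial (k + 1))).mul ((Red.nat N).sub (Red.nat k))) (mul_ne_zero hd1 hNk))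
    unfold bb
    convert this using 1
    have e : ((-1 : ZMod p)) ^ (N + k) * ((-1) ^ N) ^ 3 = (-1) ^ k := by
      rw [pow_add, ← pow_mul, mul_right_comm, ← pow_add, show N + N * 3 = 2 * (2 * N) by ring,
        pow_mul]; simp
    have e2 : (((-1 : ZMod p)) ^ (k + 1)) ^ 2 = 1 := by
      rw [← pow_mul, mul_comm, pow_mul]; simp
    rw [mul_pow, e2, one_mul, desc_cast hk.le]
    rw [← e]
    field_simp
  · unfold GG
    rw [show N + 1 + k = N + k + 1 by ring, hf_split hp, hf_succ N, Nat.succ_descFactorial_succ,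
      Nat.factorial_succ, ← hQ, show (1 : ℚ) / 2 + N = p / 2 by rw [hpq]; ring]
    have h1 : (N.factorial : ℚ) ≠ 0 := by exact_mod_cast N.factorial_ne_zero
    have h2 : (N : ℚ) + 1 ≠ 0 := by positivity
    have h3 := hf_ne (k + 1)
    push_cast
    rw [pow_succ, pow_succ]
    field_simp
    ring

end modp

/-- `1 / (N * choose)` type weights -/
def uu (N i : ℕ) : ℚ := (i.factorial : ℚ) * ((N - 1 - i).factorial : ℚ) / N.factorial

lemma uu_succ {N i : ℕ} (h : i < N) : uu (N + 1) i = uu N i * (((N : ℚ) - i) / (N + 1)) := by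
  obtain ⟨d, rfl⟩ : ∃ d, N = i + d + 1 := ⟨N - i - 1, by omega⟩
  unfold uu
  rw [show i + d + 1 + 1 - 1 - i = d + 1 by omega, show i + d + 1 - 1 - i = d by omega,
    Nat.factorial_succ d, Nat.factorial_succ (i + d + 1)]
  have : ((i + d + 1).factorial : ℚ) ≠ 0 := by exact_mod_cast Nat.factorial_ne_zero _
  push_cast
  field_simp
  ring

lemma uu_succ' {N i : ℕ} (h : i < N) : uu (N + 1) (i + 1) = uu N i * (((i : ℚ) + 1) / (N + 1)) := by
  obtain ⟨d, rfl⟩ : ∃ d, N = i + d + 1 := ⟨N - i - 1, by omega⟩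
  unfold uu
  rw [show i + d + 1 + 1 - 1 - (i + 1) = d by omega, show i + d + 1 - 1 - i = d by omega,
    Nat.factorial_succ i, Nat.factorial_succ (i + d + 1)]
  have : ((i + d + 1).factorial : ℚ) ≠ 0 := by exact_mod_cast Nat.factorial_ne_zero _
  push_cast
  field_simp

lemma uu_zero (N : ℕ) : uu (N + 1) 0 = 1 / (N + 1) := by
  unfold uu
  have : (N.factorial : ℚ) ≠ 0 := by exact_mod_cast Nat.factorial_ne_zero _
  simp [Nat.factorial_succ]
  field_simp

lemma uu_last (N : ℕ) : uu (N + 1) N = 1 / (N + 1) := by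
  unfold uu
  have : (N.factorial : ℚ) ≠ 0 := by exact_mod_cast Nat.factorial_ne_zero _
  simp [Nat.factorial_succ]
  field_simp

lemma uu_alt (N : ℕ) : ∑ i ∈ Finset.range N, (-1) ^ (i + 1) * uu N i =
    ((-1) ^ N - 1) / (N + 1) := by
  have h := Finset.sum_range_sub (fun i => (-1 : ℚ) ^ i * uu (N + 1) i) N
  rw [uu_zero, uu_last] at h
  have e : ∑ i ∈ Finset.range N, (-1) ^ (i + 1) * uu N i = ∑ i ∈ Finset.range N,
      ((-1 : ℚ) ^ (i + 1) * uu (N + 1) (i + 1) - (-1 : ℚ) ^ i * uu (N + 1) i) := by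
    refine Finset.sum_congr rfl fun i hi => ?_
    rw [uu_succ (Finset.mem_range.1 hi), uu_succ' (Finset.mem_range.1 hi)]
    have : (N : ℚ) + 1 ≠ 0 := by positivity
    field_simp
    ring
  rw [e, h]
  ring

lemma uu_sum (N : ℕ) : ∑ i ∈ Finset.range N, (-1) ^ (i + 1) * uu N i / ((i : ℚ) + 1) =
    ∑ i ∈ Finset.range N, 1 / ((i : ℚ) + 1) ^ 2 +
      2 * ∑ i ∈ Finset.range N, (-1) ^ (i + 1) * (1 / ((i : ℚ) + 1) ^ 2) := by
  induction N with
  | zero => simp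
  | succ N ih =>
    have hN : (N : ℚ) + 1 ≠ 0 := by positivity
    have e : ∑ i ∈ Finset.range N, (-1) ^ (i + 1) * uu (N + 1) i / ((i : ℚ) + 1) =
        ∑ i ∈ Finset.range N, (-1) ^ (i + 1) * uu N i / ((i : ℚ) + 1) -
        1 / (N + 1) * ∑ i ∈ Finset.range N, (-1) ^ (i + 1) * uu N i := by
      rw [Finset.mul_sum, ← Finset.sum_sub_distrib]
      refine Finset.sum_congr rfl fun i hi => ?_
      rw [uu_succ (Finset.mem_range.1 hi)]
      have : (i : ℚ) + 1 ≠ 0 := by positivity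
      field_simp
      ring
    rw [Finset.sum_range_succ, e, ih, uu_alt, uu_last, Finset.sum_range_succ _ N,
      Finset.sum_range_succ _ N]
    field_simp
    ring

lemma bb_sum (N : ℕ) : ∑ k ∈ Finset.range N, bb N k =
    (-1) ^ N * (∑ i ∈ Finset.range N, 1 / ((i : ℚ) + 1) ^ 2 +
      2 * ∑ i ∈ Finset.range N, (-1) ^ (i + 1) * (1 / ((i : ℚ) + 1) ^ 2)) := by
  rw [← uu_sum, ← Finset.sum_range_reflect, Finset.mul_sum]
  refine Finset.sum_congr rfl fun i hi => ?_
  obtain ⟨d, rfl⟩ : ∃ d, N = i + d + 1 := ⟨N - i - 1, by have := Finset.mem_range.1 hi; omega⟩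
  unfold bb uu
  rw [show i + d + 1 - 1 - i = d by omega]
  have h := Nat.factorial_mul_descFactorial (n := i + d + 1) (k := d + 1) (by omega)
  rw [show i + d + 1 - (d + 1) = i by omega] at h
  rw [← h]
  have h0 : (i + d + 1).descFactorial (d + 1) ≠ 0 := by
    intro h1; rw [h1, mul_zero] at h; exact Nat.factorial_ne_zero _ h.symm
  have h1 : ((i + d + 1).descFactorial (d + 1) : ℚ) ≠ 0 := by exact_mod_cast h0
  have h2 : (i.factorial : ℚ) ≠ 0 := by exact_mod_cast Nat.factorial_ne_zero _
  have h3 : (i : ℚ) + 1 ≠ 0 := by positivity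
  have e : (-1 : ℚ) ^ (i + d + 1) * (-1) ^ (i + 1) = (-1) ^ d := by
    rw [← pow_add, show i + d + 1 + (i + 1) = d + 2 * (i + 1) by ring, pow_add, pow_mul]; simp
  rw [← e]
  push_cast
  rw [show (i : ℚ) + d + 1 - d = i + 1 by ring]
  field_simp

lemma euler_int (n : ℕ) : ∃ z : ℤ, eulerNumber n = z := by
  induction n using Nat.strong_induction_on with
  | _ n ih =>
    cases n with
    | zero => exact ⟨1, by rw [eulerNumber]; simp⟩
    | succ n =>
      choose! f hf using ih
      refine ⟨-∑ k : Fin (n + 1), ((n + 1).choose k : ℤ) *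
        (if Even (n + 1 - (k : ℕ)) then 1 else 0) * f k, ?_⟩
      rw [eulerNumber]
      push_cast
      congr 1
      refine Finset.sum_congr rfl fun k _ => ?_
      rw [hf k k.isLt]
      split_ifs with h
      · rw [h.neg_one_pow]; norm_num
      · rw [(Nat.not_even_iff_odd.1 h).neg_one_pow]; norm_num

lemma euler_rec (n : ℕ) (hn : 0 < n) : ∑ k ∈ Finset.range (n + 1),
    (n.choose k : ℚ) * (1 + (-1 : ℚ) ^ (n - k)) * eulerNumber k = 0 := by
  obtain ⟨n, rfl⟩ : ∃ m, n = m + 1 := ⟨n - 1, by omega⟩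
  rw [Finset.sum_range_succ]
  have h : eulerNumber (n + 1) = -∑ k ∈ Finset.range (n + 1),
        ((n + 1).choose k : ℚ) * ((1 + (-1 : ℚ) ^ (n + 1 - k)) / 2) * eulerNumber k := by
    rw [eulerNumber, Finset.sum_range]
  have e : ∑ k ∈ Finset.range (n + 1),
        ((n + 1).choose k : ℚ) * (1 + (-1 : ℚ) ^ (n + 1 - k)) * eulerNumber k =
      2 * ∑ k ∈ Finset.range (n + 1),
        ((n + 1).choose k : ℚ) * ((1 + (-1 : ℚ) ^ (n + 1 - k)) / 2) * eulerNumber k := by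
    rw [Finset.mul_sum]
    exact Finset.sum_congr rfl fun k _ => by ring
  rw [e, h]
  simp
  ring

lemma euler_odd (n : ℕ) (hn : Odd n) : eulerNumber n = 0 := by
  induction n using Nat.strong_induction_on with
  | _ n ih =>
    cases n with
    | zero => simp at hn
    | succ n =>
      rw [eulerNumber, neg_eq_zero]
      refine Finset.sum_eq_zero fun k _ => ?_
      have hk := k.isLt
      rcases Nat.even_or_odd (k : ℕ) with h | h
      · rw [(Nat.Odd.sub_even (by omega) hn h).neg_one_pow]; simp
      · rw [ih k hk h]; simp

open Polynomial in
lemma umbral {R : Type*} [CommRing R] (e : ℕ → R) (h0 : e 0 = 1)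
    (hrec : ∀ n, 0 < n → ∑ k ∈ Finset.range (n + 1),
      (n.choose k : R) * (1 + (-1 : R) ^ (n - k)) * e k = 0)
    (n : ℕ) (hn : ∑ k ∈ Finset.range (n + 1), (n.choose k : R) * e k = 0) :
    ∃ W : R → R, W 0 = e n ∧ W 1 = 0 ∧ ∀ x, W (x + 1) + W (x - 1) = 2 * x ^ n := by
  let L : R[X] →ₗ[R] R := Polynomial.lsum fun k => LinearMap.toSpanSingleton R R (e k)
  have hL : ∀ k, L (X ^ k) = e k := by
    intro k
    simp [L, Polynomial.lsum_apply, ← Polynomial.monomial_one_right_eq_X_pow,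
      Polynomial.sum_monomial_index]
  have hLp : ∀ (a : R) (n : ℕ), L ((X + C a) ^ n) =
      ∑ k ∈ Finset.range (n + 1), (n.choose k : R) * a ^ (n - k) * e k := by
    intro a n
    rw [add_pow, map_sum]
    refine Finset.sum_congr rfl fun k _ => ?_
    have : (X : R[X]) ^ k * C a ^ (n - k) * (n.choose k : R[X]) =
        ((n.choose k : R) * a ^ (n - k)) • X ^ k := by
      rw [Polynomial.smul_eq_C_mul]
      simp only [map_mul, map_pow, map_natCast]
      ring
    rw [this, map_smul, hL, smul_eq_mul]
  have key : ∀ f : R[X], L (f.comp (X + C 1)) + L (f.comp (X + C (-1))) = 2 * f.eval 0 := by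
    intro f
    induction f using Polynomial.induction_on' with
    | add f g hf hg => 
      simp only [Polynomial.add_comp, map_add, Polynomial.eval_add] at *
      linear_combination hf + hg
    | monomial n a =>
      rw [← Polynomial.C_mul_X_pow_eq_monomial]
      simp only [Polynomial.mul_comp, Polynomial.C_comp, Polynomial.pow_comp, Polynomial.X_comp]
      simp only [← Polynomial.smul_eq_C_mul, map_smul]
      rw [hLp, hLp]
      rcases Nat.eq_zero_or_pos n with rfl | hn
      · simp [h0]; ring
      · have := hrec n hn
        rw [smul_eq_mul, smul_eq_mul, ← mul_add, ← Finset.sum_add_distrib]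
        simp only [Polynomial.eval_smul, Polynomial.eval_pow, Polynomial.eval_X,
          zero_pow hn.ne', smul_zero, mul_zero]
        rw [Finset.sum_congr rfl (g := fun k => (n.choose k : R) * (1 + (-1 : R) ^ (n - k)) * e k)
          (fun k _ => by rw [one_pow]; ring), this, mul_zero]
  refine ⟨fun x => L ((X + C x) ^ n), ?_, ?_, ?_⟩
  · simp [hL]
  · show L _ = 0
    rw [hLp]; simpa using hn
  · intro x
    have := key ((X + C x) ^ n)
    simp only [Polynomial.pow_comp, Polynomial.add_comp, Polynomial.X_comp, Polynomial.C_comp,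
      Polynomial.eval_pow, Polynomial.eval_add, Polynomial.eval_X, Polynomial.eval_C, zero_add] at this
    rw [← this]
    show L _ + L _ = _
    congr 3
    · rw [C_add]; ring
    · rw [C_sub, C_neg]; ring

section modp2
variable {p : ℕ} [Fact p.Prime] {N : ℕ}

lemma euler_mod (hp : p = 2 * N + 1) (hp5 : 5 ≤ p) :
    Red p (eulerNumber (p - 3)) ((-1) ^ N * (1 / 4) *
      (2 * ∑ j ∈ Finset.range N, (-1) ^ (j + 1) * ((j + 1 : ℕ) : ZMod p) ^ (p - 3))) := by
  choose f hf using euler_int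
  have hev : Even (p - 3) := ⟨N - 1, by omega⟩
  obtain ⟨W, hW0, hW1, hW⟩ := umbral (R := ZMod p) (fun k => (f k : ZMod p))
    (by
      have : f 0 = 1 := by
        have := hf 0
        rw [eulerNumber] at this
        exact_mod_cast this.symm
      simp [this])
    (by
      intro n hn
      have := euler_rec n hn
      simp only [hf] at this
      have h2 : ∑ k ∈ Finset.range (n + 1), (n.choose k : ℤ) * (1 + (-1 : ℤ) ^ (n - k)) * f k = 0 := by
        exact_mod_cast this
      have h3 := congrArg (Int.cast : ℤ → ZMod p) h2
      push_cast at h3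
      exact h3)
    (p - 3)
    (by
      have := euler_rec (p - 3) (by omega)
      simp only [hf] at this
      have h2 : ∑ k ∈ Finset.range (p - 3 + 1),
          ((p - 3).choose k : ℤ) * (1 + (-1 : ℤ) ^ (p - 3 - k)) * f k = 0 := by
        exact_mod_cast this
      have h4 : 2 * ∑ k ∈ Finset.range (p - 3 + 1), ((p - 3).choose k : ℤ) * f k = 0 := by
        rw [← h2, Finset.mul_sum]
        refine Finset.sum_congr rfl fun k hk => ?_
        have hk := Finset.mem_range.1 hk
        rcases Nat.even_or_odd k with h | h
        · rw [((Nat.even_sub (by omega)).2 (iff_of_true hev h)).neg_one_pow]; ring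
        · have : f k = 0 := by
            have := hf k
            rw [euler_odd k h] at this
            exact_mod_cast this.symm
          rw [this]; ring
      have h5 : ∑ k ∈ Finset.range (p - 3 + 1), ((p - 3).choose k : ℤ) * f k = 0 := by omega
      have h3 := congrArg (Int.cast : ℤ → ZMod p) h5
      push_cast at h3
      exact h3)
  have tel : ∀ M : ℕ, ∑ j ∈ Finset.range M,
      (-1 : ZMod p) ^ (j + 1) * (2 * (2 * ((j + 1 : ℕ) : ZMod p)) ^ (p - 3)) =
      (-1) ^ M * W (2 * M + 1) := by
    intro M
    induction M with
    | zero => simp [hW1]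
    | succ M ih =>
      rw [Finset.sum_range_succ, ih, ← hW]
      have e1 : (2 * ((M + 1 : ℕ) : ZMod p) - 1) = 2 * M + 1 := by push_cast; ring
      rw [e1]
      ring
  have h := tel N
  rw [hN hp, hW0] at h
  have e4 : (2 : ZMod p) ^ (p - 3) = 1 / 4 := by
    rw [← inv_sq hp5 (two_ne hp5)]; norm_num
  have es : (-1 : ZMod p) ^ N * (-1) ^ N = 1 := by rw [← mul_pow]; simp
  have hfin : (f (p - 3) : ZMod p) = (-1) ^ N * (1 / 4) *
      (2 * ∑ j ∈ Finset.range N, (-1) ^ (j + 1) * ((j + 1 : ℕ) : ZMod p) ^ (p - 3)) := by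
    have e5 : ∑ j ∈ Finset.range N,
      (-1 : ZMod p) ^ (j + 1) * (2 * (2 * ((j + 1 : ℕ) : ZMod p)) ^ (p - 3)) = (1 / 4) *
      (2 * ∑ j ∈ Finset.range N, (-1) ^ (j + 1) * ((j + 1 : ℕ) : ZMod p) ^ (p - 3)) := by
      rw [Finset.mul_sum, Finset.mul_sum]
      refine Finset.sum_congr rfl fun j _ => ?_
      rw [mul_pow, e4]; ring
    rw [mul_assoc, ← e5, h, ← mul_assoc, es, one_mul]
  rw [← hfin, hf]
  exact Red.int _

lemma S1_cong (hp : p = 2 * N + 1) (hp5 : 5 ≤ p) :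
    Cg p 4 (∑ k ∈ Finset.range (N + 1), tt k * (4 * (k : ℚ) + 1) -
      (p * (-1) ^ N + (p : ℚ) ^ 3 * eulerNumber (p - 3))) := by
  have hG : ∀ k, ∃ g z, k < N → (Red p g z ∧ Red p (1 / 4 * bb N k) z ∧
      GG (N + 1) k = (p : ℚ) ^ 3 * g) := by
    intro k
    by_cases hk : k < N
    · obtain ⟨g, z, h⟩ := red_GG hp hp5 hk
      exact ⟨g, z, fun _ => h⟩
    · exact ⟨0, 0, fun h => absurd h hk⟩
  choose g z hgz using hG
  have h1 := Red.sum fun i hi => (hgz i hi).1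
  have h2 := Red.sum fun i hi => (hgz i hi).2.1
  rw [← Finset.mul_sum, bb_sum] at h2
  have h3 := (red_quarter hp5).mul (((Red.one.neg).pow N).mul ((red_H2 hp hp5).add
    ((Red.nat (p := p) 2).mul (Red.sum fun j hj => ((Red.one.neg).pow (j + 1)).mul
      (red_inv_sq hp hp5 hj)))))
  have hz := h2.unique h3
  have h4 := h1.sub (euler_mod hp hp5)
  have h5 : Red p (∑ k ∈ Finset.range N, g k - eulerNumber (p - 3)) 0 := by
    convert h4 using 1
    rw [hz]; push_cast; ring
  have h6 : Cg p 4 ((p : ℚ) ^ 3 * _) := Cg.of_red h5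
  have h7 := (cg_diag hp hp5).add h6
  rw [S1_eq, Finset.sum_congr rfl fun k hk => (hgz k (Finset.mem_range.1 hk)).2.2, ← Finset.mul_sum]
  convert h7 using 1
  ring

end modp2

open Polynomial in
/-- even and odd parts of `(x+2)^(2j)`, as polynomials in `x^2`. -/
noncomputable def ab : ℕ → ℤ[X] × ℤ[X]
  | 0 => (1, 0)
  | j + 1 => ((X + 4) * (ab j).1 + 4 * X * (ab j).2, (X + 4) * (ab j).2 + 4 * (ab j).1)

open Polynomial in
lemma ab_eval (j : ℕ) (x : ℚ) :
    aeval (x ^ 2) (ab j).1 + x * aeval (x ^ 2) (ab j).2 = (x + 2) ^ (2 * j) ∧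
    aeval (x ^ 2) (ab j).1 - x * aeval (x ^ 2) (ab j).2 = (x - 2) ^ (2 * j) := by
  induction j with
  | zero => simp [ab]
  | succ j ih =>
    obtain ⟨h1, h2⟩ := ih
    simp only [ab, map_add, map_mul, aeval_X, map_ofNat, mul_add, pow_add]
    rw [← h1, ← h2]
    constructor <;> ring

open Polynomial in
noncomputable def PP (j : ℕ) : ℤ[X] := (X + 3) * (ab j).1 + (3 * X + 1) * (ab j).2

open Polynomial in
lemma PP_eval (j : ℕ) (x : ℚ) : 2 * (x * aeval (x ^ 2) (PP j)) =
    (x + 1) ^ 3 * (x + 2) ^ (2 * j) + (x - 1) ^ 3 * (x - 2) ^ (2 * j) := by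
  obtain ⟨h1, h2⟩ := ab_eval j x
  rw [← h1, ← h2, PP]
  simp only [map_add, map_mul, aeval_X, map_ofNat, map_one]
  ring

open Polynomial in
lemma ab_deg (j : ℕ) : (ab j).1.Monic ∧ (ab j).1.natDegree = j ∧ (ab j).2.degree < j := by
  induction j with
  | zero => simp [ab]
  | succ j ih =>
    obtain ⟨h1, h2, h3⟩ := ih
    have hm : (X + 4 : ℤ[X]).Monic := monic_X_add_C 4
    have hd : (X + 4 : ℤ[X]).natDegree = 1 := natDegree_X_add_C 4
    have hmm : ((X + 4) * (ab j).1).Monic := hm.mul h1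
    have hnd : ((X + 4) * (ab j).1).natDegree = j + 1 := by rw [hm.natDegree_mul h1, hd, h2]; ring
    have hdd : ((X + 4) * (ab j).1).degree = ((j + 1 : ℕ) : WithBot ℕ) := by
      rw [degree_eq_natDegree hmm.ne_zero, hnd]
    have h4 : (4 * X * (ab j).2).degree < ((j + 1 : ℕ) : WithBot ℕ) := by
      rw [degree_lt_iff_coeff_zero] at *
      intro m hm
      rw [mul_assoc, show (4 : ℤ[X]) = C 4 from rfl, coeff_C_mul]
      obtain ⟨m, rfl⟩ : ∃ k, m = k + 1 := ⟨m - 1, by omega⟩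
      rw [coeff_X_mul, h3 m (by omega), mul_zero]
    refine ⟨hmm.add_of_left (by rw [hdd]; exact h4), ?_, ?_⟩
    · show natDegree (_ + _) = _
      rw [natDegree_add_eq_left_of_degree_lt (by rw [hdd]; exact h4), hnd]
    · show degree (_ + _) < _
      rw [degree_lt_iff_coeff_zero] at *
      intro m hm
      obtain ⟨m, rfl⟩ : ∃ k, m = k + 1 := ⟨m - 1, by omega⟩
      rw [coeff_add, add_mul, coeff_add, coeff_X_mul, show (4 : ℤ[X]) = C 4 from rfl, coeff_C_mul,
        coeff_C_mul, h3 m (by omega), h3 (m + 1) (by omega), coeff_eq_zero_of_natDegree_lt (by omega)]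
      simp

open Polynomial in
lemma PP_deg (j : ℕ) : (PP j).Monic ∧ (PP j).natDegree = j + 1 := by
  obtain ⟨h1, h2, h3⟩ := ab_deg j
  have hm : (X + 3 : ℤ[X]).Monic := monic_X_add_C 3
  have hd : (X + 3 : ℤ[X]).natDegree = 1 := natDegree_X_add_C 3
  have hmm : ((X + 3) * (ab j).1).Monic := hm.mul h1
  have hnd : ((X + 3) * (ab j).1).natDegree = j + 1 := by rw [hm.natDegree_mul h1, hd, h2]; ring
  have hdd : ((X + 3) * (ab j).1).degree = ((j + 1 : ℕ) : WithBot ℕ) := by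
    rw [degree_eq_natDegree hmm.ne_zero, hnd]
  have h4 : ((3 * X + 1) * (ab j).2).degree < ((j + 1 : ℕ) : WithBot ℕ) := by
    rw [degree_lt_iff_coeff_zero] at *
    intro m hm
    obtain ⟨m, rfl⟩ : ∃ k, m = k + 1 := ⟨m - 1, by omega⟩
    rw [add_mul, mul_assoc, show (3 : ℤ[X]) = C 3 from rfl, coeff_add, coeff_C_mul,
      coeff_X_mul, one_mul, h3 m (by omega), h3 (m + 1) (by omega)]
    simp
  refine ⟨hmm.add_of_left (by rw [hdd]; exact h4), ?_⟩
  unfold PP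
  rw [natDegree_add_eq_left_of_degree_lt (by rw [hdd]; exact h4), hnd]

open Polynomial in
lemma PP_sum (j n : ℕ) : ∑ k ∈ Finset.range (n + 1),
    tt k * ((4 * (k : ℚ) + 1) * aeval ((4 * (k : ℚ) + 1) ^ 2) (PP j)) =
    4 * (2 * n + 1) ^ 3 * tt n * (4 * n + 3) ^ (2 * j) := by
  induction n with
  | zero =>
    have := PP_eval j 1
    norm_num at this
    simp [tt, hf]
    linear_combination this / 2
  | succ n ih =>
    rw [Finset.sum_range_succ, ih]
    have h1 := PP_eval j (4 * ((n + 1 : ℕ) : ℚ) + 1)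
    have h2 := tt_succ n
    push_cast at h1 ⊢
    have e1 : (4 * ((n : ℚ) + 1) + 1 + 2) = 4 * (n + 1) + 3 := by ring
    have e2 : (4 * ((n : ℚ) + 1) + 1 - 2) = 4 * n + 3 := by ring
    rw [e1, e2] at h1
    generalize ((4 * ((n : ℚ) + 1) + 3)) ^ (2 * j) = A at *
    generalize ((4 * (n : ℚ) + 3)) ^ (2 * j) = B at *
    linear_combination tt (n + 1) / 2 * h1 + 4 * B * h2

open Polynomial in
def Good (g : ℤ[X]) : Prop :=
  ∃ a c : ℤ, ∀ (p N : ℕ) [Fact p.Prime], p = 2 * N + 1 → 5 ≤ p →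
    Cg p 4 (∑ k ∈ Finset.range (N + 1),
      tt k * ((4 * (k : ℚ) + 1) * aeval ((4 * (k : ℚ) + 1) ^ 2) g) -
      (a * ∑ k ∈ Finset.range (N + 1), tt k * (4 * (k : ℚ) + 1) + (p : ℚ) ^ 3 * c))

open Polynomial in
lemma Good.add {f g : ℤ[X]} (hf : Good f) (hg : Good g) : Good (f + g) := by
  obtain ⟨a, c, h⟩ := hf
  obtain ⟨a', c', h'⟩ := hg
  refine ⟨a + a', c + c', fun p N _ hp hp5 => ?_⟩
  convert (h p N hp hp5).add (h' p N hp hp5) using 1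
  simp only [map_add, mul_add, Finset.sum_add_distrib]
  push_cast
  ring

open Polynomial in
lemma Good.mul {f : ℤ[X]} (hf : Good f) (b : ℤ) : Good (C b * f) := by
  obtain ⟨a, c, h⟩ := hf
  refine ⟨b * a, b * c, fun p N _ hp hp5 => ?_⟩
  convert (h p N hp hp5).mul (Red.int b) using 1
  have e : ∑ k ∈ Finset.range (N + 1),
      tt k * ((4 * (k : ℚ) + 1) * aeval ((4 * (k : ℚ) + 1) ^ 2) (C b * f)) =
      b * ∑ k ∈ Finset.range (N + 1),
      tt k * ((4 * (k : ℚ) + 1) * aeval ((4 * (k : ℚ) + 1) ^ 2) f) := by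
    rw [Finset.mul_sum]
    refine Finset.sum_congr rfl fun k _ => ?_
    simp
    ring
  rw [e]
  push_cast
  ring

open Polynomial in
lemma Good.one : Good 1 :=
  ⟨1, 0, fun p N _ hp hp5 => ⟨0, 0, Red.zero, by simp⟩⟩

open Polynomial in
lemma Good.pp (j : ℕ) : Good (PP j) := by
  refine ⟨0, 4, fun p N _ hp hp5 => ?_⟩
  have hpq : (p : ℚ) = 2 * N + 1 := by rw [hp]; push_cast; ring
  rw [PP_sum, ← hpq, show (4 * (N : ℚ) + 3) = 2 * p + 1 by rw [hpq]; ring]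
  have h : Red p (4 * (tt N * (2 * p + 1) ^ (2 * j) - 1)) 0 := by
    have := (Red.nat (p := p) 4).mul (((red_tt hp hp5).mul
      ((((Red.nat (p := p) 2).mul (Red.nat p)).add Red.one).pow (2 * j))).sub Red.one)
    convert this using 1 <;> simp
  have h' : Cg p 4 ((p : ℚ) ^ 3 * _) := Cg.of_red h
  convert h' using 1
  push_cast
  ring

open Polynomial in
lemma Good.all (n : ℕ) : ∀ g : ℤ[X], g.natDegree ≤ n → Good g := by
  induction n with
  | zero =>
    intro g hg
    rw [eq_C_of_natDegree_le_zero hg, ← mul_one (C _)]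
    exact Good.one.mul _
  | succ n ih =>
    intro g hg
    obtain ⟨h1, h2⟩ := PP_deg n
    have e : g = (g - C (g.coeff (n + 1)) * PP n) + C (g.coeff (n + 1)) * PP n := by ring
    rw [e]
    refine (ih _ ?_).add ((Good.pp n).mul _)
    rw [natDegree_le_iff_coeff_eq_zero]
    intro m hm
    rw [coeff_sub, coeff_C_mul]
    rcases Nat.lt_or_ge (n + 1) m with h | h
    · rw [coeff_eq_zero_of_natDegree_lt (by omega), coeff_eq_zero_of_natDegree_lt (p := PP n) (by omega)]
      simp
    · have : m = n + 1 := by omega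
      subst this
      have : (PP n).coeff (n + 1) = 1 := by rw [← h2]; exact h1
      rw [this]; ring

/-- for every positive odd m there exist integers a, c such that for all
primes p ≥ 5, Σ_{k=0}^{(p-1)/2} (-1)^k (4k+1)^m ((1/2)_k/(1)_k)^3
≡ a(p(-1)^{(p-1)/2} + p^3 E_{p-3}) + p^3 c (mod p^4) in the p-adic sense. -/
theorem stmt12 (m : ℕ) (hm : Odd m) (hm0 : 0 < m) :
    ∃ a c : ℤ, ∀ p : ℕ, p.Prime → 5 ≤ p →
      ∀ S R : ℚ,
        S = ∑ k ∈ Finset.range ((p - 1) / 2 + 1),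
          (-1 : ℚ) ^ k * (4 * (k : ℚ) + 1) ^ m *
            ((∏ i ∈ Finset.range k, ((1 : ℚ) / 2 + i)) / (Nat.factorial k)) ^ 3 →
        R = (a : ℚ) * ((p : ℚ) * (-1) ^ ((p - 1) / 2) + (p : ℚ) ^ 3 * eulerNumber (p - 3))
            + (p : ℚ) ^ 3 * (c : ℚ) →
        (S = R ∨ (4 : ℤ) ≤ padicValRat p (S - R)) := by
  obtain ⟨n, rfl⟩ := hm
  obtain ⟨a, c, h⟩ := Good.all _ (Polynomial.X ^ n : Polynomial ℤ) le_rfl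
  refine ⟨a, c, fun p hpp hp5 S R hS hR => ?_⟩
  have : Fact p.Prime := ⟨hpp⟩
  obtain ⟨N, hp⟩ : ∃ N, p = 2 * N + 1 := hpp.odd_of_ne_two (by omega)
  have hN2 : (p - 1) / 2 = N := by omega
  rw [hN2] at hS hR
  have h1 := (h p N hp hp5).add ((S1_cong hp hp5).mul (Red.int a))
  have h2 : Cg p 4 (S - R) := by
    convert h1 using 1
    have : S = ∑ k ∈ Finset.range (N + 1), tt k * ((4 * (k : ℚ) + 1) *
        Polynomial.aeval ((4 * (k : ℚ) + 1) ^ 2) (Polynomial.X ^ n : Polynomial ℤ)) := by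
      rw [hS]
      refine Finset.sum_congr rfl fun k _ => ?_
      simp only [tt, hf, map_pow, Polynomial.aeval_X]
      rw [pow_succ, pow_mul]
      ring
    rw [← this, hR]
    ring
  obtain ⟨y, w, hy, e⟩ := h2
  rcases hy.val 4 with h3 | h3
  · left
    rw [← e] at h3
    linarith
  · right
    rw [e]
    exact_mod_cast h3
end

section
/- Let a(k), b(k) ∈ K[k] with a(k) = b(k+α), b(β+k) = b(β-k), and -(α+1)·deg a ∉ ℕ. Set γ = -β + (α-1)/2 and r = deg a. Then for every nonnegative integer m, the coset of (k+γ)^{2m} modulo S_{a,b} lies in the span of the cosets of (k+γ)^{2i} with 0 ≤ 2i < r - 1, and the coset of (k+γ)^{2m+1} lies in the span of the cosets of (k+γ)^{2i+1} with 0 ≤ 2i+1 < r - 1. -/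
open Polynomial

theorem aux_neg {K : Type*} [Field K] (p : Polynomial K) (i : ℕ) :
    (p.comp (-X)).coeff i = p.coeff i * (-1) ^ i := by
  have h : (-X : Polynomial K) = C (-1) * X := by simp
  rw [h, comp_C_mul_X_coeff]

theorem aux_prod {K : Type*} [Field K] (F : Polynomial K) (h : K) (n : ℕ)
    (hF : F.natDegree ≤ n + 1) (j : ℕ) :
    (F * (X + C h) ^ j).coeff (n + j) = F.coeff n + j * h * F.coeff (n + 1) ∧
    (F * (X + C h) ^ j).coeff (n + j + 1) = F.coeff (n + 1) ∧
    ∀ i, n + j + 1 < i → (F * (X + C h) ^ j).coeff i = 0 := by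
  induction j with
  | zero =>
    refine ⟨by simp, by simp, fun i hi => ?_⟩
    simpa using coeff_eq_zero_of_natDegree_lt (by omega)
  | succ j ih =>
    obtain ⟨h1, h2, h3⟩ := ih
    have key : ∀ i, (F * (X + C h) ^ (j + 1)).coeff (i + 1) =
        (F * (X + C h) ^ j).coeff i + (F * (X + C h) ^ j).coeff (i + 1) * h := by
      intro i
      rw [pow_succ, ← mul_assoc, mul_add, coeff_add, coeff_mul_X, coeff_mul_C]
    refine ⟨?_, ?_, ?_⟩
    · rw [← add_assoc, key, h1, h2]; push_cast; ring
    · rw [← add_assoc, key, h2, h3 _ (by omega)]; ring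
    · intro i hi
      obtain ⟨i, rfl⟩ : ∃ k, i = k + 1 := ⟨i - 1, by omega⟩
      rw [key, h3 _ (by omega), h3 _ (by omega)]; ring

theorem aux_taylor {K : Type*} [Field K] (B : Polynomial K) (s : K) (n : ℕ)
    (hB : B.natDegree ≤ n + 1) :
    (B.comp (X + C s)).coeff n = B.coeff n + (n + 1) * s * B.coeff (n + 1) ∧
    (B.comp (X + C s)).coeff (n + 1) = B.coeff (n + 1) := by
  have e : B.comp (X + C s) = taylor s B := rfl
  rw [e, taylor_coeff, taylor_coeff]
  constructor
  · have : (hasseDeriv n B).natDegree < 2 := by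
      have := natDegree_hasseDeriv_le B n
      omega
    rw [eval_eq_sum_range' this]
    simp [Finset.sum_range_succ, hasseDeriv_coeff, add_comm 1 n]
    ring
  · have : (hasseDeriv (n + 1) B).natDegree < 1 := by
      have := natDegree_hasseDeriv_le B (n + 1)
      omega
    rw [eval_eq_sum_range' this]
    simp [hasseDeriv_coeff]

/-- The difference operator in the symmetric variable. -/
noncomputable def auxM {K : Type*} [Field K] (B : Polynomial K) (s : K) :
    Polynomial K →ₗ[K] Polynomial K where
  toFun y := B.comp (X + C s) * y.comp (X + C (1 / 2)) - B.comp (X - C s) * y.comp (X - C (1 / 2))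
  map_add' y z := by simp only [add_comp]; ring
  map_smul' c y := by simp only [smul_eq_C_mul, RingHom.id_apply, mul_comp, C_comp]; ring

theorem aux_coeff {K : Type*} [Field K] (B : Polynomial K) (s : K)
    (hB : B.comp (-X) = B) (j i : ℕ) :
    (auxM B s (X ^ j)).coeff i =
      (1 - (-1) ^ (j + i)) * (B.comp (X + C s) * (X + C (1 / 2)) ^ j).coeff i := by
  have h : auxM B s (X ^ j) = B.comp (X + C s) * (X + C (1 / 2)) ^ j -
      C ((-1) ^ j) * (B.comp (X + C s) * (X + C (1 / 2)) ^ j).comp (-X) := by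
    simp only [auxM, LinearMap.coe_mk, AddHom.coe_mk, pow_comp, X_comp, mul_comp, add_comp,
      C_comp, comp_assoc]
    have h1 : B.comp (-X + C s) = B.comp (X - C s) := by
      conv_rhs => rw [← hB]
      rw [comp_assoc]; congr 1; simp; ring
    have h2 : (X - C (1 / 2) : Polynomial K) = - (-X + C (1 / 2)) := by ring
    rw [h1, h2, neg_pow (-X + C (1 / 2) : Polynomial K)]
    simp only [map_pow, map_neg, map_one]
    ring
  rw [h, coeff_sub, coeff_C_mul, aux_neg, pow_add]
  ring

theorem aux_main {K : Type*} [Field K] [CharZero K] (B : Polynomial K) (α s : K) (r : ℕ)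
    (hs : s = (α + 1) / 2)
    (hB : B.comp (-X) = B) (hr : r = B.natDegree)
    (hna : ∀ n : ℕ, -(α + 1) * (r : K) ≠ (n : K)) (e : ℕ) (he : e < 2) (m : ℕ) :
    (X : Polynomial K) ^ (2 * m + e) ∈ LinearMap.range (auxM B s) ⊔
      Submodule.span K ((fun i : ℕ => (X : Polynomial K) ^ (2 * i + e)) ''
        ((Finset.filter (fun i => 2 * i + e < r - 1) (Finset.range r) : Finset ℕ) : Set ℕ)) := by
  have hr0 : r ≠ 0 := by
    rintro rfl
    exact hna 0 (by simp)
  have hlc : B.coeff r ≠ 0 := by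
    rw [hr]
    have : B ≠ 0 := by
      rintro rfl
      exact hr0 (by simpa using hr)
    simpa using this
  have hpar : ∀ i, B.coeff i = B.coeff i * (-1) ^ i := fun i => by
    conv_lhs => rw [← hB]
    exact aux_neg B i
  have hev : Even r := by
    by_contra hodd
    have h := hpar r
    rw [(Nat.not_even_iff_odd.mp hodd).neg_one_pow] at h
    exact hlc (self_eq_neg.mp (by simpa using h))
  obtain ⟨q, rfl⟩ : ∃ q, r = q + 1 := ⟨r - 1, by omega⟩
  have hq : Odd q := by
    rcases Nat.even_or_odd q with h | h
    · exact absurd hev (Nat.not_even_iff_odd.mpr h.add_one)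
    · exact h
  have hBq : B.coeff q = 0 := by
    have h := hpar q
    rw [hq.neg_one_pow] at h
    exact self_eq_neg.mp (by simpa using h)
  obtain ⟨ht1, ht2⟩ := aux_taylor B s q hr.ge
  have hdeg : (B.comp (X + C s)).natDegree ≤ q + 1 := by
    have : (B.comp (X + C s)).natDegree = B.natDegree := natDegree_taylor B s
    omega
  induction m using Nat.strong_induction_on with
  | _ m ih =>
  by_cases hlt : 2 * m + e < q + 1 - 1
  · apply Submodule.mem_sup_right
    apply Submodule.subset_span
    exact ⟨m, by simp; omega, rfl⟩
  obtain ⟨j, hj⟩ : ∃ j, 2 * m + e = q + j := ⟨2 * m + e - q, by omega⟩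
  obtain ⟨hp1, hp2, hp3⟩ := aux_prod (B.comp (X + C s)) (1 / 2) q hdeg j
  set V := LinearMap.range (auxM B s) ⊔
      Submodule.span K ((fun i : ℕ => (X : Polynomial K) ^ (2 * i + e)) ''
        ((Finset.filter (fun i => 2 * i + e < q + 1 - 1) (Finset.range (q + 1)) : Finset ℕ) :
          Set ℕ)) with hV
  have hP : auxM B s (X ^ j) ∈ V := Submodule.mem_sup_left ⟨_, rfl⟩
  have hq' := Nat.odd_iff.mp hq
  have hPd : (auxM B s (X ^ j)).natDegree < q + j + 1 := by
    rw [Nat.lt_succ_iff, natDegree_le_iff_coeff_eq_zero]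
    intro i hi
    rw [aux_coeff B s hB]
    rcases Nat.lt_or_ge (q + j + 1) i with h | h
    · rw [hp3 i h, mul_zero]
    · have : Even (j + i) := by rw [Nat.even_iff]; omega
      rw [this.neg_one_pow]; ring
  have hPc : (auxM B s (X ^ j)).coeff (q + j) ≠ 0 := by
    have ho : Odd (j + (q + j)) := by rw [Nat.odd_iff]; omega
    rw [aux_coeff B s hB, hp1, ho.neg_one_pow, ht1, ht2, hBq, hs]
    have h := hna j
    intro h0
    apply h
    have h1 : ((α + 1) * ((q + 1 : ℕ) : K) + j) * B.coeff (q + 1) = 0 := by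
      rw [← h0]; push_cast; ring
    rcases mul_eq_zero.mp h1 with h2 | h2
    · linear_combination -h2
    · exact absurd h2 hlc
  have hsum := as_sum_range' _ _ hPd
  rw [Finset.sum_range_succ] at hsum
  have hrest : ∑ i ∈ Finset.range (q + j), monomial i ((auxM B s (X ^ j)).coeff i) ∈ V := by
    apply Submodule.sum_mem
    intro i hi
    rw [Finset.mem_range] at hi
    by_cases h : (j + i) % 2 = 0
    · rw [aux_coeff B s hB, (Nat.even_iff.mpr h).neg_one_pow]
      simp
    · obtain ⟨k, hk⟩ : ∃ k, i = 2 * k + e := ⟨(i - e) / 2, by omega⟩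
      rw [← C_mul_X_pow_eq_monomial, ← smul_eq_C_mul]
      apply Submodule.smul_mem
      rw [hk]
      exact ih k (by omega)
  have hmon : monomial (q + j) ((auxM B s (X ^ j)).coeff (q + j)) ∈ V := by
    rw [hsum] at hP
    exact (Submodule.add_mem_iff_right V hrest).mp hP
  rw [← C_mul_X_pow_eq_monomial, ← smul_eq_C_mul] at hmon
  rw [hj]
  exact (Submodule.smul_mem_iff V hPc).mp hmon

theorem aux_final {K : Type*} [Field K] [CharZero K] (a b : Polynomial K) (α β γ : K)
    (hab : a = b.comp (X + C α))
    (hsym : b.comp (C β + X) = b.comp (C β - X))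
    (hγ : γ = -β + (α - 1) / 2) (r : ℕ) (hr : r = a.natDegree)
    (hna : ∀ n : ℕ, -(α + 1) * (r : K) ≠ (n : K)) (e : ℕ) (he : e < 2) (m : ℕ) :
      ∃ x : Polynomial K, ∃ c : ℕ → K,
        (X + C γ) ^ (2 * m + e) = (a * x.comp (X + 1) - b.comp (X - 1) * x)
          + ∑ i ∈ Finset.filter (fun i => 2 * i + e < r - 1) (Finset.range r),
              C (c i) * (X + C γ) ^ (2 * i + e) := by
  have hB : (b.comp (C β + X)).comp (-X) = b.comp (C β + X) := by
    rw [comp_assoc]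
    conv_rhs => rw [hsym]
    congr 1
    simp [sub_eq_add_neg]
  have hrB : r = (b.comp (C β + X)).natDegree := by
    have h1 : (b.comp (X + C β)).natDegree = b.natDegree := natDegree_taylor b β
    have h2 : (b.comp (X + C α)).natDegree = b.natDegree := natDegree_taylor b α
    rw [hr, hab, add_comm (C β), h1, h2]
  have h := aux_main (b.comp (C β + X)) α ((α + 1) / 2) r rfl hB hrB hna e he m
  obtain ⟨w, ⟨y, rfl⟩, z, hz, hyz⟩ := Submodule.mem_sup.mp h
  obtain ⟨c, rfl⟩ := (Submodule.mem_span_image_finset_iff_exists_fun' K).mp hz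
  refine ⟨y.comp (X + C (γ - 1 / 2)), c, ?_⟩
  have h2 := congrArg (fun p => p.comp (X + C γ)) hyz
  simp only [auxM, LinearMap.coe_mk, AddHom.coe_mk, add_comp, sub_comp, mul_comp, comp_assoc,
    pow_comp, X_comp, C_comp, Polynomial.sum_comp, smul_eq_C_mul] at h2
  rw [← h2, hab]
  simp only [comp_assoc, add_comp, X_comp, C_comp]
  have e1 : (C β + (X + C γ + C ((α + 1) / 2)) : Polynomial K) = X + C α := by
    have : C α = C β + C γ + C ((α + 1) / 2) := by
      rw [← C_add, ← C_add]; congr 1; rw [hγ]; ring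
    rw [this]; ring
  have e2 : (C β + (X + C γ - C ((α + 1) / 2)) : Polynomial K) = X - 1 := by
    have : (-1 : Polynomial K) = C β + C γ - C ((α + 1) / 2) := by
      rw [← C_add, ← C_sub, ← C_1, ← C_neg]; congr 1; rw [hγ]; ring
    rw [sub_eq_add_neg X 1, this]; ring
  have e3 : (X + C γ + C (1 / 2) : Polynomial K) = X + 1 + C (γ - 1 / 2) := by
    have : (1 : Polynomial K) = C (1 / 2) + C (1 / 2) := by
      rw [← C_add, ← C_1]; congr 1; ring
    rw [this, C_sub]; ring
  have e4 : (X + C γ - C (1 / 2) : Polynomial K) = X + C (γ - 1 / 2) := by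
    rw [C_sub]; ring
  rw [e1, e2, e3, e4]

/-- for a(k) = b(k+α) with b(β+k) = b(β-k) and -(α+1)·deg a ∉ ℕ,
the coset of (k+γ)^{2m} (resp. (k+γ)^{2m+1}) modulo S_{a,b} lies in the span of
the cosets of (k+γ)^{2i}, 0 ≤ 2i < r-1 (resp. (k+γ)^{2i+1}, 0 ≤ 2i+1 < r-1). -/
theorem stmt14 {K : Type*} [Field K] [CharZero K] (a b : Polynomial K) (α β γ : K)
    (hab : a = b.comp (X + C α))
    (hsym : b.comp (C β + X) = b.comp (C β - X))
    (hγ : γ = -β + (α - 1) / 2) (r : ℕ) (hr : r = a.natDegree)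
    (hna : ∀ n : ℕ, -(α + 1) * (r : K) ≠ (n : K)) :
    ∀ m : ℕ,
      (∃ x : Polynomial K, ∃ c : ℕ → K,
        (X + C γ) ^ (2 * m) = (a * x.comp (X + 1) - b.comp (X - 1) * x)
          + ∑ i ∈ Finset.filter (fun i => 2 * i < r - 1) (Finset.range r),
              C (c i) * (X + C γ) ^ (2 * i)) ∧
      (∃ x : Polynomial K, ∃ c : ℕ → K,
        (X + C γ) ^ (2 * m + 1) = (a * x.comp (X + 1) - b.comp (X - 1) * x)
          + ∑ i ∈ Finset.filter (fun i => 2 * i + 1 < r - 1) (Finset.range r),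
              C (c i) * (X + C γ) ^ (2 * i + 1)) := by
  intro m
  exact ⟨aux_final a b α β γ hab hsym hγ r hr hna 0 (by norm_num) m,
    aux_final a b α β γ hab hsym hγ r hr hna 1 (by norm_num) m⟩
end
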